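/- Let k ≥ 0 be an integer and let G' be a graph of genus C(k,2) with a vertex v such that for every integer 1 ≤ l ≤ k-2 one has r_{G'}(l(k+1)·v) ≥ l(l+3)/2. Then for every integer r ≥ 0: if 0 ≤ r ≤ k, then r_{G'}(r(k+1)·v) ≥ r(r+3)/2, and if r ≥ k+1, then r_{G'}(r(k+1)·v) ≥ r(r+3)/2 - (r-k)(r-k+1)/2. -/

import Mathlib

open Finset

variable {V : Type*} [Fintype V] [DecidableEq V]

/-- A finite loopless multigraph on vertex type `V`, given by symmetric edge multiplicities. -/
structure Multigraph (V : Type*) [Fintype V] [DecidableEq V] where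
  mult : V → V → ℕ
  symm : ∀ u v, mult u v = mult v u
  loopless : ∀ v, mult v v = 0

namespace Multigraph

def Adj (G : Multigraph V) (u v : V) : Prop := 0 < G.mult u v

/-- A graph is connected. -/
def Connected (G : Multigraph V) : Prop :=
  Nonempty V ∧ ∀ u v : V, Relation.ReflTransGen G.Adj u v

/-- Valence of a vertex. -/
def valence (G : Multigraph V) (v : V) : ℕ := ∑ u, G.mult v u

/-- The Laplacian applied to an integer-valued function on the vertices. -/
def laplacian (G : Multigraph V) (f : V → ℤ) : V → ℤ :=
  fun w => ∑ u, (G.mult w u : ℤ) * (f w - f u)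

/-- Degree of a divisor. -/
def degree (D : V → ℤ) : ℤ := ∑ v, D v

/-- A divisor is effective if all coefficients are nonnegative. -/
def Effective (D : V → ℤ) : Prop := ∀ v, 0 ≤ D v

/-- Linear equivalence of divisors: they differ by a sequence of chip-firing moves,
equivalently by a Laplacian of an integer function. -/
def LinEquiv (G : Multigraph V) (D D' : V → ℤ) : Prop :=
  ∃ f : V → ℤ, D' = D - G.laplacian f

/-- A divisor is winnable if it is linearly equivalent to an effective divisor. -/
def Winnable (G : Multigraph V) (D : V → ℤ) : Prop :=
  ∃ E : V → ℤ, Effective E ∧ G.LinEquiv D E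

/-- The Baker–Norine rank of a divisor: the largest `r` such that `D - E` is winnable for
every effective divisor `E` of degree `r` (the defining set contains all negative integers,
and its supremum is `-1` precisely when `D` itself is not winnable). -/
noncomputable def rank (G : Multigraph V) (D : V → ℤ) : ℤ :=
  sSup {r : ℤ | ∀ E : V → ℤ, Effective E → degree E = r → G.Winnable (fun w => D w - E w)}

/-- The `k`-th gonality of a graph: the smallest degree of a divisor of rank `k`. -/
noncomputable def gonality (G : Multigraph V) (k : ℤ) : ℤ :=
  sInf {d : ℤ | ∃ D : V → ℤ, G.rank D = k ∧ degree D = d}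

/-- A graph is gonality-tight if its second gonality exceeds its first by exactly 1. -/
def GonalityTight (G : Multigraph V) : Prop :=
  G.gonality 2 = G.gonality 1 + 1

/-- A divisor realises the `k`-th gonality if it has rank `k` and degree `gon_k(G)`. -/
def Realises (G : Multigraph V) (k : ℤ) (D : V → ℤ) : Prop :=
  G.rank D = k ∧ degree D = G.gonality k

/-- A divisor is `v`-reduced: nonnegative away from `v`, and set-firing any nonempty set of
vertices not containing `v` creates a negative coefficient inside the set. -/
def Reduced (G : Multigraph V) (v : V) (D : V → ℤ) : Prop :=
  (∀ w, w ≠ v → 0 ≤ D w) ∧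
    ∀ U : Finset V, U.Nonempty → v ∉ U →
      ∃ w ∈ U, D w - ∑ u ∈ Uᶜ, (G.mult w u : ℤ) < 0

/-- The genus (first Betti number) of a graph: `|E| - |V| + 1`. -/
def genus (G : Multigraph V) : ℤ :=
  ((∑ u, ∑ v, G.mult u v : ℕ) : ℤ) / 2 - Fintype.card V + 1

/-- The canonical divisor of a graph. -/
def canonical (G : Multigraph V) : V → ℤ :=
  fun w => (G.valence w : ℤ) - 2

/-- The subgraph induced on a set `S` of vertices (with all edges among `S`). -/
def induce (G : Multigraph V) (S : Finset V) : Multigraph {x // x ∈ S} where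
  mult a b := G.mult a b
  symm a b := G.symm a b
  loopless a := G.loopless a

/-- `G.SeparatedBy u w v` means every path from `w` to `v` passes through `u`. -/
def SeparatedBy (G : Multigraph V) (u w v : V) : Prop :=
  ¬ Relation.ReflTransGen (fun x y => G.Adj x y ∧ x ≠ u ∧ y ≠ u) w v

end Multigraph

/-- Size of the `i`-th level of a quasi-banana graph: level `0` has a single vertex. -/
def qbSize (q : ℕ → ℕ) (i : ℕ) : ℕ := if i = 0 then 1 else q i

/-- `ℓ` is a quasi-banana labelling of `G` exhibiting `G ≅ QB_m(q_1, …, q_m)`: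
`ℓ` is a bijection onto the pairs `(i, j)` with `i ≤ m`, `1 ≤ j ≤ qbSize q i`
(vertex `u_{i,j}` is the vertex labelled `(i,j)`), and the edge multiplicities are:
one edge between distinct vertices of the same level, `(∑_{k=1}^{i} q_k) + 2` edges
between `u_{i,1}` and each `u_{i+1,j}`, and no other edges. -/
def Multigraph.IsQBLabelling (G : Multigraph V) (m : ℕ) (q : ℕ → ℕ) (ℓ : V → ℕ × ℕ) : Prop :=
  (∀ i, 1 ≤ i → i ≤ m → 0 < q i) ∧
  Function.Injective ℓ ∧
  (∀ v : V, (ℓ v).1 ≤ m ∧ 1 ≤ (ℓ v).2 ∧ (ℓ v).2 ≤ qbSize q (ℓ v).1) ∧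
  (∀ i j : ℕ, i ≤ m → 1 ≤ j → j ≤ qbSize q i → ∃ v, ℓ v = (i, j)) ∧
  (∀ v w : V, v ≠ w → G.mult v w =
    if (ℓ v).1 = (ℓ w).1 then 1
    else if (ℓ v).1 + 1 = (ℓ w).1 ∧ (ℓ v).2 = 1 then (∑ i ∈ Finset.Icc 1 (ℓ v).1, q i) + 2
    else if (ℓ w).1 + 1 = (ℓ v).1 ∧ (ℓ w).2 = 1 then (∑ i ∈ Finset.Icc 1 (ℓ w).1, q i) + 2
    else 0)

/-- A graph is a quasi-banana graph if it is isomorphic to some `QB_m(N)`. -/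
def Multigraph.IsQuasiBanana (G : Multigraph V) : Prop :=
  ∃ (m : ℕ) (q : ℕ → ℕ) (ℓ : V → ℕ × ℕ), G.IsQBLabelling m q ℓ

/-- The graph obtained from `G'` by attaching a complete graph `K_n`: `n` new vertices
pairwise joined by exactly one edge, each joined to `v` by exactly `k+1` edges. -/
def attachComplete (G' : Multigraph V) (v : V) (k n : ℕ) : Multigraph (V ⊕ Fin n) where
  mult x y :=
    match x, y with
    | Sum.inl a, Sum.inl b => G'.mult a b
    | Sum.inl a, Sum.inr _ => if a = v then k + 1 else 0
    | Sum.inr _, Sum.inl b => if b = v then k + 1 else 0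
    | Sum.inr i, Sum.inr j => if i = j then 0 else 1
  symm := by
    rintro (a | i) (b | j)
    · exact G'.symm a b
    · rfl
    · rfl
    · by_cases h : i = j
      · simp [h]
      · simp [h, Ne.symm h]
  loopless := by
    rintro (a | i)
    · exact G'.loopless a
    · simp

/-!
The theorem is an application of Riemann's inequality `deg D - g ≤ r(D)`: for a divisor of degree
`r(k+1)` on a graph of genus at most `k(k-1)/2`, it reads
`2 r(D) ≥ r(r+3) - (r-k)(r-k+1)`, and the correction vanishes for `r = k - 1` and `r = k`.

Riemann's inequality says that every divisor `D` of degree at least `g` is winnable, that is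
`Δf ≤ D` for some integer function `f`. Take `f` to minimise `n⟨f, Δf⟩ - ⟨c, f⟩`, where `n = |V|`
and `c` has degree zero; the minimum exists because connectedness bounds `⟨c, f⟩` by a multiple of
the total variation of `f`, which the energy `⟨f, Δf⟩` dominates up to an additive constant.
Comparing `f` with `f - 1_w` gives `2nΔf(w) ≤ n val(w) + c(w)`, and the degree condition is what
allows `c ≤ 2n(D + 1) - n val - 1`, whence `Δf(w) < D(w) + 1`.
-/

namespace Multigraph

section Divisor

variable {W : Type*}

lemma effective_single [DecidableEq W] (w : W) {d : ℤ} (hd : 0 ≤ d) :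
    Effective (Pi.single w d) :=
  (Pi.single_nonneg (α := fun _ : W => ℤ)).2 hd

variable [Fintype W]

lemma degree_sub (D E : W → ℤ) : degree (D - E) = degree D - degree E :=
  sum_sub_distrib D E

lemma degree_smul (r : ℤ) (D : W → ℤ) : degree (r • D) = r * degree D := by
  simp only [degree, Pi.smul_apply, smul_eq_mul, mul_sum]

lemma Effective.eq_zero_of_degree_eq_zero {E : W → ℤ} (hE : Effective E) (h : degree E = 0) :
    E = 0 :=
  funext fun w => (sum_eq_zero_iff_of_nonneg fun u _ => hE u).1 h w (mem_univ w)

lemma degree_single [DecidableEq W] (w : W) (d : ℤ) : degree (Pi.single w d) = d := by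
  simp [degree]

end Divisor

section Laplacian

variable (G : Multigraph V)

lemma laplacian_zero : G.laplacian 0 = 0 := by
  funext w
  simp [laplacian]

lemma laplacian_sub (f h : V → ℤ) :
    G.laplacian (f - h) = G.laplacian f - G.laplacian h := by
  funext w
  simp only [laplacian, Pi.sub_apply, ← sum_sub_distrib]
  exact sum_congr rfl fun u _ => by ring

lemma laplacian_single_one_self (w : V) :
    G.laplacian (Pi.single w 1) w = G.valence w := by
  simp only [laplacian, valence, Nat.cast_sum]
  refine sum_congr rfl fun u _ => ?_
  obtain rfl | hu := eq_or_ne u w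
  · simp [G.loopless]
  · simp [hu]

lemma two_mul_dotProduct_laplacian (f h : V → ℤ) :
    2 * (f ⬝ᵥ G.laplacian h) =
      ∑ w, ∑ u, (G.mult w u : ℤ) * ((f w - f u) * (h w - h u)) := by
  have expand : f ⬝ᵥ G.laplacian h = ∑ w, ∑ u, (G.mult w u : ℤ) * (f w * (h w - h u)) := by
    simp only [dotProduct, laplacian, mul_sum]
    exact sum_congr rfl fun w _ => sum_congr rfl fun u _ => by ring
  have swap : f ⬝ᵥ G.laplacian h = ∑ w, ∑ u, (G.mult w u : ℤ) * (f u * (h u - h w)) := by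
    rw [expand, sum_comm]
    exact sum_congr rfl fun w _ => sum_congr rfl fun u _ => by rw [G.symm u w]
  calc 2 * (f ⬝ᵥ G.laplacian h) = f ⬝ᵥ G.laplacian h + f ⬝ᵥ G.laplacian h := two_mul _
    _ = ∑ w, ∑ u, (G.mult w u : ℤ) * (f w * (h w - h u)) +
          ∑ w, ∑ u, (G.mult w u : ℤ) * (f u * (h u - h w)) := congrArg₂ _ expand swap
    _ = ∑ w, ∑ u, (G.mult w u : ℤ) * ((f w - f u) * (h w - h u)) := by
      simp only [← sum_add_distrib]
      exact sum_congr rfl fun w _ => sum_congr rfl fun u _ => by ring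

lemma dotProduct_laplacian_comm (f h : V → ℤ) :
    f ⬝ᵥ G.laplacian h = h ⬝ᵥ G.laplacian f := by
  refine mul_left_cancel₀ (two_ne_zero' ℤ) ?_
  simp only [two_mul_dotProduct_laplacian, mul_comm (f _ - f _)]

lemma dotProduct_laplacian_self_nonneg (f : V → ℤ) : 0 ≤ f ⬝ᵥ G.laplacian f := by
  have energy_nonneg : 0 ≤ ∑ w, ∑ u, (G.mult w u : ℤ) * ((f w - f u) * (f w - f u)) :=
    sum_nonneg fun w _ => sum_nonneg fun u _ =>
      mul_nonneg (Nat.cast_nonneg _) (mul_self_nonneg _)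
  linarith [G.two_mul_dotProduct_laplacian f f]

lemma degree_laplacian (f : V → ℤ) : degree (G.laplacian f) = 0 := by
  have green := G.two_mul_dotProduct_laplacian 1 f
  simpa [degree, one_dotProduct] using green

lemma dotProduct_laplacian_sub_single_one (f : V → ℤ) (w : V) :
    (f - Pi.single w 1) ⬝ᵥ G.laplacian (f - Pi.single w 1) =
      f ⬝ᵥ G.laplacian f - 2 * G.laplacian f w + G.valence w := by
  rw [laplacian_sub, sub_dotProduct, dotProduct_sub, dotProduct_sub,
    G.dotProduct_laplacian_comm f (Pi.single w 1), single_one_dotProduct, single_one_dotProduct,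
    laplacian_single_one_self]
  ring

end Laplacian

section Variation

/-- The total variation of `f` along the edges of `G`. Each edge is counted twice, once for each
ordering of its ends. It mediates between linear functionals and the energy `f ⬝ᵥ G.laplacian f`. -/
def variation (G : Multigraph V) (f : V → ℤ) : ℤ :=
  ∑ w, ∑ u, (G.mult w u : ℤ) * |f w - f u|

variable {G : Multigraph V}

lemma Adj.abs_sub_le_variation {a b : V} (h : G.Adj a b) (f : V → ℤ) :
    |f a - f b| ≤ G.variation f :=
  calc |f a - f b| ≤ (G.mult a b : ℤ) * |f a - f b| :=
      le_mul_of_one_le_left (abs_nonneg _) (by exact_mod_cast h)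
    _ ≤ ∑ u, (G.mult a u : ℤ) * |f a - f u| :=
      single_le_sum (f := fun u => (G.mult a u : ℤ) * |f a - f u|)
        (fun u _ => by positivity) (mem_univ b)
    _ ≤ G.variation f :=
      single_le_sum (f := fun w => ∑ u, (G.mult w u : ℤ) * |f w - f u|)
        (fun w _ => by positivity) (mem_univ a)

lemma exists_abs_sub_le_mul_variation {a b : V} (h : Relation.ReflTransGen G.Adj a b) :
    ∃ N : ℤ, ∀ f : V → ℤ, |f a - f b| ≤ N * G.variation f := by
  induction h with
  | refl => exact ⟨0, fun f => by simp⟩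
  | @tail b c _ hbc ih =>
    obtain ⟨N, hN⟩ := ih
    refine ⟨N + 1, fun f => ?_⟩
    calc |f a - f c| ≤ |f a - f b| + |f b - f c| := abs_sub_le _ _ _
      _ ≤ N * G.variation f + G.variation f := add_le_add (hN f) (hbc.abs_sub_le_variation f)
      _ = (N + 1) * G.variation f := by ring

lemma exists_dotProduct_le_mul_variation (hG : G.Connected) {c : V → ℤ} (hc : degree c = 0) :
    ∃ N : ℤ, ∀ f : V → ℤ, c ⬝ᵥ f ≤ N * G.variation f := by
  obtain ⟨⟨a⟩, hreach⟩ := hG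
  choose N hN using fun w => exists_abs_sub_le_mul_variation (hreach w a)
  refine ⟨∑ w, |c w| * N w, fun f => ?_⟩
  calc c ⬝ᵥ f = ∑ w, c w * f w - degree c * f a := by rw [hc, zero_mul, sub_zero, dotProduct]
    _ = ∑ w, c w * (f w - f a) := by simp only [degree, sum_mul, mul_sub, sum_sub_distrib]
    _ ≤ ∑ w, |c w| * (N w * G.variation f) := sum_le_sum fun w _ =>
      calc c w * (f w - f a) ≤ |c w| * |f w - f a| := by
            rw [← abs_mul]
            exact le_abs_self _
        _ ≤ |c w| * (N w * G.variation f) :=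
            mul_le_mul_of_nonneg_left (hN w f) (abs_nonneg _)
    _ = (∑ w, |c w| * N w) * G.variation f := by simp only [sum_mul, mul_assoc]

lemma two_mul_mul_variation_le (G : Multigraph V) (N : ℤ) (f : V → ℤ) :
    2 * (N * G.variation f) ≤
      2 * (f ⬝ᵥ G.laplacian f) + ∑ w, ∑ u, (G.mult w u : ℤ) * N ^ 2 := by
  rw [two_mul_dotProduct_laplacian]
  simp only [variation, mul_sum, ← sum_add_distrib]
  refine sum_le_sum fun w _ => sum_le_sum fun u _ => ?_
  calc 2 * (N * ((G.mult w u : ℤ) * |f w - f u|))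
      = (G.mult w u : ℤ) * (2 * |f w - f u| * N) := by ring
    _ ≤ (G.mult w u : ℤ) * (|f w - f u| ^ 2 + N ^ 2) :=
      mul_le_mul_of_nonneg_left (two_mul_le_add_sq _ _) (Nat.cast_nonneg _)
    _ = (G.mult w u : ℤ) * ((f w - f u) * (f w - f u)) + (G.mult w u : ℤ) * N ^ 2 := by
      rw [sq_abs]
      ring

lemma bddBelow_range_energy_sub_dotProduct (hG : G.Connected) {n : ℤ} (hn : 0 < n) {c : V → ℤ}
    (hc : degree c = 0) :
    BddBelow (Set.range fun f : V → ℤ => n * (f ⬝ᵥ G.laplacian f) - c ⬝ᵥ f) := by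
  obtain ⟨N, hN⟩ := exists_dotProduct_le_mul_variation hG hc
  refine ⟨-∑ w, ∑ u, (G.mult w u : ℤ) * N ^ 2, ?_⟩
  rintro _ ⟨f, rfl⟩
  have energy_le : f ⬝ᵥ G.laplacian f ≤ n * (f ⬝ᵥ G.laplacian f) :=
    le_mul_of_one_le_left (G.dotProduct_laplacian_self_nonneg f)
      (Order.one_le_iff_pos.2 hn)
  have const_nonneg : 0 ≤ ∑ w, ∑ u, (G.mult w u : ℤ) * N ^ 2 := by positivity
  linarith [hN f, G.two_mul_mul_variation_le N f]

end Variation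

section Winnable

variable {G : Multigraph V}

lemma exists_energy_sub_dotProduct_le (hG : G.Connected) {n : ℤ} (hn : 0 < n) {c : V → ℤ}
    (hc : degree c = 0) :
    ∃ f : V → ℤ, ∀ h : V → ℤ,
      n * (f ⬝ᵥ G.laplacian f) - c ⬝ᵥ f ≤ n * (h ⬝ᵥ G.laplacian h) - c ⬝ᵥ h := by
  have hbdd := bddBelow_range_energy_sub_dotProduct hG hn hc
  obtain ⟨f, hf⟩ := Int.csInf_mem (Set.range_nonempty _) hbdd
  exact ⟨f, fun h => hf.trans_le (csInf_le hbdd ⟨h, rfl⟩)⟩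

lemma exists_laplacian_le_of_degree_eq_zero (hG : G.Connected) {n : ℤ} (hn : 0 < n) {c : V → ℤ}
    (hc : degree c = 0) :
    ∃ f : V → ℤ, ∀ w, 2 * n * G.laplacian f w ≤ n * G.valence w + c w := by
  obtain ⟨f, hf⟩ := exists_energy_sub_dotProduct_le hG hn hc
  refine ⟨f, fun w => ?_⟩
  have hmin := hf (f - Pi.single w 1)
  rw [dotProduct_laplacian_sub_single_one, dotProduct_sub, dotProduct_single_one] at hmin
  linarith

lemma exists_laplacian_le_of_degree_nonneg (hG : G.Connected) {n : ℤ} (hn : 0 < n) {c : V → ℤ}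
    (hc : 0 ≤ degree c) :
    ∃ f : V → ℤ, ∀ w, 2 * n * G.laplacian f w ≤ n * G.valence w + c w := by
  obtain ⟨a⟩ := hG.1
  have hdeg : degree (c - Pi.single a (degree c)) = 0 := by
    rw [degree_sub, degree_single, sub_self]
  obtain ⟨f, hf⟩ := exists_laplacian_le_of_degree_eq_zero hG hn hdeg
  refine ⟨f, fun w => (hf w).trans (add_le_add_right ?_ _)⟩
  exact sub_le_self _ (effective_single a hc w)

lemma winnable_iff_exists_laplacian_le (D : V → ℤ) :
    G.Winnable D ↔ ∃ f : V → ℤ, G.laplacian f ≤ D := by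
  constructor
  · rintro ⟨_, hE, f, rfl⟩
    exact ⟨f, fun w => sub_nonneg.1 (hE w)⟩
  · rintro ⟨f, hf⟩
    exact ⟨D - G.laplacian f, fun w => sub_nonneg.2 (hf w), f, rfl⟩

lemma winnable_of_genus_le_degree (hG : G.Connected) {D : V → ℤ} (hD : G.genus ≤ degree D) :
    G.Winnable D := by
  have := hG.1
  have hn_pos : (0 : ℤ) < Fintype.card V := by exact_mod_cast Fintype.card_pos
  set n : ℤ := (Fintype.card V : ℤ) with hn
  let c : V → ℤ := fun w => n * (2 * (D w + 1) - G.valence w) - 1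
  have degree_c : degree c = n * (2 * degree D + 2 * n - ∑ w, (G.valence w : ℤ) - 1) := by
    simp only [degree, c, sum_sub_distrib, sum_add_distrib, ← mul_sum, sum_const, card_univ,
      nsmul_eq_mul, ← hn]
    ring
  have genus_eq : G.genus = (∑ w, (G.valence w : ℤ)) / 2 - n + 1 := by
    simp [genus, valence, hn]
  have hc : 0 ≤ degree c := by
    rw [degree_c]
    exact mul_nonneg hn_pos.le (by omega)
  obtain ⟨f, hf⟩ := exists_laplacian_le_of_degree_nonneg hG hn_pos hc
  refine (winnable_iff_exists_laplacian_le D).2 ⟨f, fun w => Int.lt_add_one_iff.1 ?_⟩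
  have scaled : 2 * n * G.laplacian f w < 2 * n * (D w + 1) := by linarith [hf w]
  exact lt_of_mul_lt_mul_left scaled (by positivity)

lemma Winnable.degree_nonneg {D : V → ℤ} (hD : G.Winnable D) : 0 ≤ degree D := by
  obtain ⟨f, hf⟩ := (winnable_iff_exists_laplacian_le D).1 hD
  exact (G.degree_laplacian f).ge.trans (sum_le_sum fun w _ => hf w)

end Winnable

section Rank

variable {G : Multigraph V}

lemma le_rank [Nonempty V] {D : V → ℤ} {s : ℤ}
    (h : ∀ E : V → ℤ, Effective E → degree E = s → G.Winnable (D - E)) : s ≤ G.rank D := by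
  refine le_csSup ⟨max 0 (degree D), fun r hr => ?_⟩ h
  refine le_max_iff.2 (or_iff_not_imp_left.2 fun hr_pos => ?_)
  obtain ⟨a⟩ := ‹Nonempty V›
  have degree_nonneg : 0 ≤ degree (D - Pi.single a r) :=
    (hr _ (effective_single a (not_le.1 hr_pos).le) (degree_single a r)).degree_nonneg
  rw [degree_sub, degree_single] at degree_nonneg
  exact sub_nonneg.1 degree_nonneg

lemma Winnable.rank_nonneg [Nonempty V] {D : V → ℤ} (hD : G.Winnable D) : 0 ≤ G.rank D :=
  le_rank fun E hE hdeg => by rwa [hE.eq_zero_of_degree_eq_zero hdeg, sub_zero]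

lemma degree_sub_genus_le_rank (hG : G.Connected) (D : V → ℤ) :
    degree D - G.genus ≤ G.rank D := by
  have := hG.1
  refine le_rank fun E _ hE => winnable_of_genus_le_degree hG ?_
  rw [degree_sub, hE, sub_sub_cancel]

lemma rank_zero_nonneg [Nonempty V] (G : Multigraph V) : 0 ≤ G.rank 0 :=
  ((winnable_iff_exists_laplacian_le 0).2 ⟨0, G.laplacian_zero.le⟩).rank_nonneg

lemma le_two_mul_rank_smul (hG : G.Connected) {k : ℕ} (hgenus : G.genus ≤ k.choose 2)
    {D : V → ℤ} (hD : (k : ℤ) + 1 ≤ degree D) {r : ℤ} (hr : 0 ≤ r) :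
    r * (r + 3) - (r - k) * (r - k + 1) ≤ 2 * G.rank (r • D) := by
  have two_mul_choose : 2 * (k.choose 2 : ℤ) = k * (k - 1) := by
    qify
    rw [Nat.cast_choose_two]
    ring
  calc r * (r + 3) - (r - k) * (r - k + 1)
      = 2 * (r * (k + 1) - k.choose 2) := by linear_combination two_mul_choose
    _ ≤ 2 * (degree (r • D) - G.genus) := by
      rw [degree_smul]
      gcongr
    _ ≤ 2 * G.rank (r • D) := by
      gcongr
      exact degree_sub_genus_le_rank hG _

end Rank

end Multigraph

theorem stmt13_general {G : Multigraph V} (hG : G.Connected) {k : ℕ}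
    (hgenus : G.genus ≤ k.choose 2) {D : V → ℤ} (hD : (k : ℤ) + 1 ≤ Multigraph.degree D)
    (hrank : ∀ l : ℤ, 1 ≤ l → l ≤ (k : ℤ) - 2 → l * (l + 3) ≤ 2 * G.rank (l • D))
    {r : ℤ} (hr : 0 ≤ r) :
    (r ≤ k → r * (r + 3) ≤ 2 * G.rank (r • D)) ∧
      r * (r + 3) - (r - k) * (r - k + 1) ≤ 2 * G.rank (r • D) := by
  have riemann := Multigraph.le_two_mul_rank_smul hG hgenus hD hr
  refine ⟨fun hrk => ?_, riemann⟩
  have cases_r : r = 0 ∨ (1 ≤ r ∧ r ≤ k - 2) ∨ r - k + 1 = 0 ∨ r - k = 0 := by omega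
  obtain rfl | ⟨hr1, hr2⟩ | h | h := cases_r
  · have := hG.1
    simpa using G.rank_zero_nonneg
  · exact hrank r hr1 hr2
  all_goals simpa [h] using riemann

/-- With `G'` of genus `C(k,2)` satisfying the rank hypothesis at `v`,
for every `r ≥ 0`: `r(r(k+1)·v) ≥ r(r+3)/2` if `r ≤ k`, and
`r(r(k+1)·v) ≥ r(r+3)/2 - (r-k)(r-k+1)/2` if `r ≥ k+1`. -/
theorem stmt13 (G' : Multigraph V) (hG' : G'.Connected)
    (k : ℕ) (hgenus : G'.genus = (Nat.choose k 2 : ℤ)) (v : V)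
    (hrank : ∀ l : ℤ, 1 ≤ l → l ≤ (k : ℤ) - 2 →
      l * (l + 3) ≤ 2 * G'.rank (fun w => if w = v then l * ((k : ℤ) + 1) else 0)) :
    ∀ r : ℤ, 0 ≤ r →
      (r ≤ (k : ℤ) →
        r * (r + 3) ≤ 2 * G'.rank (fun w => if w = v then r * ((k : ℤ) + 1) else 0)) ∧
      ((k : ℤ) + 1 ≤ r →
        r * (r + 3) - (r - (k : ℤ)) * (r - (k : ℤ) + 1) ≤
          2 * G'.rank (fun w => if w = v then r * ((k : ℤ) + 1) else 0)) := by
  have smul_single (l : ℤ) :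
      (fun w => if w = v then l * ((k : ℤ) + 1) else 0) = l • Pi.single v ((k : ℤ) + 1) := by
    funext w
    simp [Pi.single_apply]
  simp only [smul_single] at hrank ⊢
  have hdeg := (Multigraph.degree_single v ((k : ℤ) + 1)).ge
  exact fun r hr => (stmt13_general hG' hgenus.le hdeg hrank hr).imp_right fun h _ => h
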